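/- Let ζ = e^{πi/12}, ω = e^{2πi/3}, let G_31 ⊂ GL_4(C) be the finite complex reflection group generated by the 60 order-2 reflections s(v) whose roots v are: e_a − i^k e_b (1 ≤ a < b ≤ 4, 0 ≤ k < 4), e_a (1 ≤ a ≤ 4), and the vectors (i^{a_1}, i^{a_2}, i^{a_3}, i^{a_4})^T with a_1 + a_2 + a_3 + a_4 even. Let g = s(e_4) s(e_1 − e_2) s(e_1 + e_4) s(e_1 + i e_2 + e_3 − i e_4) s(e_1 + e_2 + e_3 + e_4). Let E be the ζ^2-eigenspace of g^2, a 2-dimensional subspace, N_E = {s ∈ G_31 : s(E) ⊆ E}, and π_E restriction to E. Then there exists a C-linear isomorphism ψ : E → C^2 such that ψ ∘ π_E(N_E) ∘ ψ^{−1} = G_10, where G_10 ⊂ GL_2(C) is generated by r_1 = (ω/2)·[[−1−i, 1−i], [−1−i, −1+i]] and r_4' = (1/2)·[[1+i, −1+i], [−1+i, 1+i]]. In other words, the 12-reflection subquotient of G_31 is isomorphic to G_10. -/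

import Mathlib

open Matrix MvPolynomial

namespace Paper

noncomputable section

/-- The standard Hermitian inner product `(v, w) = Σ v_i conj(w_i)` on `ℂ^N`. -/
def herm {N : ℕ} (v w : Fin N → ℂ) : ℂ := ∑ i, v i * (starRingEnd ℂ) (w i)

/-- The reflection `s(v, λ) : w ↦ w - (1 - λ) ((w,v)/(v,v)) v` with root `v` and
nontrivial eigenvalue `λ`, as a matrix. -/
def reflMat {N : ℕ} (v : Fin N → ℂ) (lam : ℂ) : Matrix (Fin N) (Fin N) ℂ :=
  Matrix.of fun i j =>
    (if i = j then (1 : ℂ) else 0) - (1 - lam) * v i * (starRingEnd ℂ) (v j) / herm v v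

/-- The monomial matrix `ι(θ, σ)` with `e_i ↦ θ_{σ(i)} e_{σ(i)}`. -/
def monomialMatrix {N : ℕ} (θ : Fin N → ℂ) (σ : Equiv.Perm (Fin N)) :
    Matrix (Fin N) (Fin N) ℂ :=
  Matrix.of fun j i => if j = σ i then θ (σ i) else 0

/-- The imprimitive reflection group `G(m, p, N)`: all monomial `N × N` matrices whose
nonzero entries are `m`-th roots of unity and whose product of nonzero entries is an
`(m/p)`-th root of unity. -/
def Gimp (m p N : ℕ) : Set (Matrix (Fin N) (Fin N) ℂ) :=
  {M | ∃ (θ : Fin N → ℂ) (σ : Equiv.Perm (Fin N)),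
    (∀ i, θ i ^ m = 1) ∧ (∏ i, θ i) ^ (m / p) = 1 ∧ M = monomialMatrix θ σ}

/-- The `μ`-eigenspace of (the linear map of) a matrix. -/
def eigSpace {n : ℕ} (M : Matrix (Fin n) (Fin n) ℂ) (μ : ℂ) : Submodule ℂ (Fin n → ℂ) :=
  Module.End.eigenspace M.mulVecLin μ

/-- The 60 roots of `G₃₁`: `e_a - i^k e_b` (`a < b`, `0 ≤ k < 4`), `e_a`, and the
vectors `(i^{t_1}, i^{t_2}, i^{t_3}, i^{t_4})` with `t_1 + t_2 + t_3 + t_4` even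
(the `G(4,2,4)`-orbit of `e_1 + e_2 + e_3 + e_4`). -/
def rootsG31 : Set (Fin 4 → ℂ) :=
  {v | ∃ (p q : Fin 4) (k : ℕ), p < q ∧ k < 4 ∧
    v = (Pi.single p 1 : Fin 4 → ℂ) - Complex.I ^ k • (Pi.single q 1 : Fin 4 → ℂ)} ∪
  {v | ∃ p : Fin 4, v = (Pi.single p 1 : Fin 4 → ℂ)} ∪
  {v | ∃ t : Fin 4 → ℕ, Even (t 0 + t 1 + t 2 + t 3) ∧ v = fun i => Complex.I ^ t i}
/-! ### An integral model of `ℤ[ζ₁₂]` used for the finite verifications -/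

/-- `a + b z + c z² + d z³`, `z` a primitive 12th root of unity. -/
structure Z12 where
  a : ℤ
  b : ℤ
  c : ℤ
  d : ℤ
deriving DecidableEq

namespace Z12

def add (x y : Z12) : Z12 :=
  ⟨Int.add x.a y.a, Int.add x.b y.b, Int.add x.c y.c, Int.add x.d y.d⟩
def sub (x y : Z12) : Z12 :=
  ⟨Int.sub x.a y.a, Int.sub x.b y.b, Int.sub x.c y.c, Int.sub x.d y.d⟩
def scale (n : ℤ) (x : Z12) : Z12 :=
  ⟨Int.mul n x.a, Int.mul n x.b, Int.mul n x.c, Int.mul n x.d⟩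
def conj (x : Z12) : Z12 := ⟨Int.add x.a x.c, x.b, Int.neg x.c, Int.neg (Int.add x.b x.d)⟩


def mul (x y : Z12) : Z12 :=
  ⟨(((x.a.mul y.a).sub (((x.b.mul y.d).add (x.c.mul y.c)).add (x.d.mul y.b))).sub (x.d.mul y.d)),
   (((x.a.mul y.b).add (x.b.mul y.a)).sub ((x.c.mul y.d).add (x.d.mul y.c))),
   ((((x.a.mul y.c).add (x.b.mul y.b)).add (x.c.mul y.a)).add (((x.b.mul y.d).add (x.c.mul y.c)).add (x.d.mul y.b))),
   (((((x.a.mul y.d).add (x.b.mul y.c)).add (x.c.mul y.b)).add (x.d.mul y.a)).add ((x.c.mul y.d).add (x.d.mul y.c)))⟩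

/-- Boolean equality of integers, cheap for the kernel. -/
def ieq : ℤ → ℤ → Bool
  | .ofNat m, .ofNat n => Nat.beq m n
  | .negSucc m, .negSucc n => Nat.beq m n
  | _, _ => false

def eqb (x y : Z12) : Bool := ieq x.a y.a && ieq x.b y.b && ieq x.c y.c && ieq x.d y.d

end Z12

/-- Vectors of length four over the model ring. -/
structure V4 where
  p : Z12
  q : Z12
  r : Z12
  s : Z12
deriving DecidableEq

/-- Row vectors of length two over the model ring. -/
structure V2 where
  p : Z12
  q : Z12
deriving DecidableEq

/-- A code in base five for vectors of Gaussian integers with small entries. -/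
def decZ (n : ℕ) : Z12 := ⟨Int.sub (Int.ofNat (n % 5)) 2, 0, 0, Int.sub (Int.ofNat (n / 5 % 5)) 2⟩
def decV (n : ℕ) : V4 := ⟨decZ n, decZ (n / 25), decZ (n / 625), decZ (n / 15625)⟩

namespace V4

def scale (n : ℤ) (x : V4) : V4 := ⟨x.p.scale n, x.q.scale n, x.r.scale n, x.s.scale n⟩
def smul (k : Z12) (x : V4) : V4 := ⟨k.mul x.p, k.mul x.q, k.mul x.r, k.mul x.s⟩
def add (x y : V4) : V4 := ⟨x.p.add y.p, x.q.add y.q, x.r.add y.r, x.s.add y.s⟩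
def sub (x y : V4) : V4 := ⟨x.p.sub y.p, x.q.sub y.q, x.r.sub y.r, x.s.sub y.s⟩
def herm (x y : V4) : Z12 :=
  (((x.p.mul y.p.conj).add (x.q.mul y.q.conj)).add (x.r.mul y.r.conj)).add (x.s.mul y.s.conj)

/-- Twice the reflection in the norm-4 root `v`. -/
def dblRefl (v x : V4) : V4 := (x.scale 2).sub (smul (herm x v) v)

def eqb (x y : V4) : Bool := x.p.eqb y.p && x.q.eqb y.q && x.r.eqb y.r && x.s.eqb y.s

/-- Apply a list of doubled reflections, the last one first. -/
def runRefl : List ℕ → V4 → V4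
  | [], x => x
  | n :: l, x => dblRefl (decV n) (runRefl l x)

end V4

namespace V2

def scale (n : ℤ) (x : V2) : V2 := ⟨x.p.scale n, x.q.scale n⟩
def herm (x y : V2) : Z12 := (x.p.mul y.p.conj).add (x.q.mul y.q.conj)

/-- Multiply a row vector by `2 r₁` (`false`) or `2 r₄'` (`true`). -/
def step (x : V2) : Bool → V2
  | false => ⟨(x.p.mul ⟨1, 1, -1, 0⟩).add (x.q.mul ⟨1, 1, -1, 0⟩),
      (x.p.mul ⟨-1, 1, 1, 0⟩).add (x.q.mul ⟨1, -1, -1, 0⟩)⟩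
  | true => ⟨(x.p.mul ⟨1, 0, 0, 1⟩).add (x.q.mul ⟨-1, 0, 0, 1⟩),
      (x.p.mul ⟨-1, 0, 0, 1⟩).add (x.q.mul ⟨1, 0, 0, 1⟩)⟩

def run : V2 → List Bool → V2
  | x, [] => x
  | x, t :: w => run (step x t) w

def eqb (x y : V2) : Bool := x.p.eqb y.p && x.q.eqb y.q

end V2

/-- The columns of the embedding `Φ`. -/
def phi0 : V4 := ⟨⟨0, 0, 0, 0⟩, ⟨0, 0, 0, 0⟩, ⟨1, 0, 0, 0⟩, ⟨0, -1, 1, 0⟩⟩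
def phi1 : V4 := ⟨⟨-1, 0, 0, 0⟩, ⟨0, 1, -1, 0⟩, ⟨0, 0, 0, 0⟩, ⟨0, 0, 0, 0⟩⟩

/-- The restriction to `E` of the linear form attached to a root. -/
def lin (n : ℕ) : V2 := ⟨V4.herm phi0 (decV n), V4.herm phi1 (decV n)⟩

/-- Codes of five roots generating everything. -/
def genCodes : List ℕ := [226562, 195168, 289068, 117938, 211588]

/-- `(c, a, p)`: the root `c` is the image of `p` under the reflection in `a`. -/
def rootTree : List (ℕ × ℕ × ℕ) := [
  (164062, 226562, 226562), (195310, 289068, 226562), (207832, 117938, 226562),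
  (210286, 211588, 226562), (195456, 195168, 195168), (101412, 289068, 195168),
  (176438, 117938, 195168), (101568, 226562, 289068), (289212, 195168, 289068),
  (101556, 289068, 289068), (270338, 117938, 289068), (191412, 211588, 289068),
  (274188, 226562, 117938), (117842, 195168, 117938), (180442, 289068, 117938),
  (272686, 117938, 117938), (101662, 211588, 117938), (180338, 226562, 211588),
  (180336, 289068, 211588), (288962, 117938, 211588), (179036, 211588, 211588),
  (195314, 289068, 164062), (182792, 117938, 164062), (195262, 195168, 195310),
  (117936, 117938, 195310), (211586, 211588, 195310), (176582, 226562, 207832),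
  (207688, 195168, 207832), (270336, 289068, 207832), (272936, 211588, 207832),
  (114182, 117938, 210286), (214186, 117938, 195456), (288912, 226562, 101412),
  (199068, 211588, 101412), (257818, 211588, 176438), (101712, 195168, 101568),
  (178942, 117938, 101568), (191556, 211588, 289212), (289056, 226562, 101556),
  (120286, 117938, 101556), (199212, 211588, 101556), (114088, 226562, 270338),
  (254062, 211588, 270338), (114038, 117938, 191412), (274092, 195168, 274188),
  (180432, 289068, 274188), (351562, 117938, 274188), (176532, 211588, 274188),
  (195216, 117938, 117842), (101566, 211588, 117842), (211692, 226562, 180442),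
  (257816, 117938, 180442), (99062, 211588, 180442), (116436, 226562, 272686),
  (272782, 195168, 272686), (210182, 289068, 272686), (289162, 226562, 101662),
  (195418, 289068, 101662), (276442, 117938, 180338), (180288, 195168, 180336),
  (199066, 117938, 180336), (101462, 226562, 288962), (289058, 195168, 288962),
  (195206, 289068, 288962), (210288, 289068, 179036), (195362, 195168, 195314),
  (272688, 117938, 195314), (179038, 211588, 195314), (214042, 226562, 182792),
  (182936, 195168, 182792), (120288, 289068, 182792), (117688, 211588, 182792),
  (211538, 211588, 195262), (274186, 226562, 117936), (117792, 195168, 117936),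
  (257962, 211588, 176582), (176436, 289068, 207688), (272792, 211588, 207688),
  (114086, 226562, 270336), (270288, 195168, 270336), (116686, 226562, 272936),
  (210432, 289068, 272936), (195562, 117938, 272936), (270432, 226562, 114182),
  (113942, 195168, 114182), (270442, 289068, 114182), (132806, 211588, 214186),
  (195156, 289068, 288912), (192808, 117938, 288912), (105312, 289068, 199068),
  (257712, 117938, 199068), (132818, 226562, 257818), (101558, 289068, 257818),
  (195468, 289068, 101712), (197816, 117938, 101712), (210192, 226562, 178942),
  (179182, 195168, 178942), (116438, 289068, 178942), (195218, 211588, 178942),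
  (285312, 289068, 191556), (132912, 117938, 191556), (211682, 117938, 289056),
  (276536, 226562, 120286), (136562, 211588, 120286), (276586, 117938, 199212),
  (176592, 289068, 114088), (179192, 211588, 114088), (129062, 226562, 254062),
  (191558, 289068, 254062), (176542, 289068, 114038), (117832, 289068, 274092),
  (180192, 195168, 180432), (39062, 226562, 351562), (195302, 289068, 351562),
  (270182, 211588, 351562), (207782, 226562, 176532), (195408, 195168, 195216),
  (132712, 289068, 195216), (289066, 226562, 101566), (114036, 211588, 211692),
  (132816, 226562, 257816), (257912, 195168, 257816), (132808, 289068, 257816),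
  (192712, 211588, 257816), (286562, 226562, 99062), (192818, 289068, 99062),
  (195166, 117938, 99062), (116532, 195168, 116436), (214092, 211588, 116436),
  (178932, 226562, 210182), (291562, 211588, 210182), (195406, 289068, 289162),
  (195466, 195168, 195418), (120192, 226562, 276442), (276682, 195168, 276442),
  (120182, 289068, 276442), (195062, 211588, 276442), (257662, 117938, 180288),
  (199162, 195168, 199066), (117686, 211588, 199066), (182842, 211588, 101462),
  (257806, 289068, 289058), (195158, 195168, 195206), (210336, 195168, 210288),
  (179086, 211588, 195362), (272832, 195168, 272688), (132662, 211588, 214042),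
  (214188, 289068, 182936), (276538, 226562, 120288), (120336, 195168, 120288),
  (273938, 226562, 117688), (180286, 289068, 211538), (274042, 195168, 274186),
  (192806, 211588, 274186), (132962, 226562, 257962), (195458, 289068, 257962),
  (276692, 117938, 257962), (207686, 226562, 176436), (116542, 226562, 272792),
  (176688, 117938, 272792), (207842, 289068, 114086), (210442, 289068, 116686),
  (195322, 195168, 195562), (270192, 195168, 270432), (114192, 226562, 270442),
  (189062, 211588, 270442), (117782, 117938, 195156), (292812, 211588, 195156),
  (255312, 289068, 192808), (182686, 117938, 105312), (257808, 195168, 257712),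
  (195208, 289068, 257712), (191462, 117938, 132818), (197662, 117938, 101558),
  (182938, 211588, 101558), (272842, 117938, 195468), (97812, 211588, 195468),
  (197912, 195168, 197816), (135312, 289068, 197816), (272938, 289068, 179182),
  (116582, 195168, 116438), (197818, 211588, 116438), (207938, 117938, 285312),
  (195416, 289068, 132912), (211442, 195168, 211682), (214032, 289068, 276536),
  (211432, 211588, 276536), (261562, 226562, 136562), (214082, 289068, 276586),
  (116688, 289068, 179192), (191566, 289068, 129062), (207792, 226562, 176542),
  (176686, 195168, 176542), (274082, 226562, 117832), (213936, 117938, 117832),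
  (120442, 211588, 39062), (113932, 226562, 270182), (270286, 289068, 207782),
  (192962, 117938, 289066), (276588, 211588, 178932), (104062, 226562, 291562),
  (197806, 289068, 291562), (120432, 195168, 120192), (276432, 226562, 120182),
  (201562, 211588, 120182), (273936, 226562, 117686), (120338, 289068, 182842),
  (210338, 289068, 179086), (182782, 289068, 276538), (180182, 289068, 273938),
  (211536, 226562, 180286), (196562, 211588, 180286), (192662, 211588, 274042),
  (130312, 117938, 207686), (191712, 117938, 210442), (274032, 226562, 117782),
  (199056, 289068, 292812), (213938, 289068, 182686), (198962, 211588, 182686),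
  (260312, 211588, 195208), (116592, 226562, 272842), (191568, 289068, 97812),
  (197962, 211588, 116582), (179088, 117938, 197818), (191662, 211588, 207938),
  (199058, 289068, 261562), (182832, 226562, 214082), (194062, 117938, 116688),
  (207936, 195168, 207792), (192912, 117938, 270286), (197712, 117938, 120338),
  (198912, 117938, 180182), (192816, 289068, 130312), (182688, 226562, 213938),
  (197808, 289068, 260312)]

/-- The 240 roots of norm 4. -/
def rootCodes : List ℕ := genCodes ++ rootTree.map Prod.fst

/-- Images of the roots under the five reflections. -/
def images : List (ℕ × List ℕ) := [
  (226562, [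
  164062, 195168, 101568, 274188, 180338, 226562, 195310, 176582, 179036, 195456, 288912,
  207688, 289068, 101712, 289056, 114088, 191412, 117938, 274092, 211692, 116436, 289162,
  211588, 211586, 101462, 210286, 195314, 214042, 195262, 274186, 180336, 207832, 176438,
  114086, 116686, 270432, 182936, 101412, 199068, 132818, 289212, 210192, 191556, 101556,
  276536, 199212, 270338, 129062, 270288, 117842, 211682, 39062, 207782, 195216, 289066,
  180442, 132816, 286562, 272686, 116532, 178932, 101662, 195418, 120192, 211538, 199066,
  288962, 101558, 195206, 179038, 195362, 116438, 210288, 182792, 214186, 276538, 273938,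
  180288, 117936, 274042, 132962, 207686, 116542, 270336, 114038, 272936, 179182, 195562,
  114182, 270192, 114192, 257806, 195156, 192808, 292812, 132712, 257818, 289058, 195468,
  197816, 178942, 210432, 272688, 195218, 97812, 257912, 180432, 120286, 261562, 120336,
  207842, 210442, 254062, 191558, 207792, 274082, 211442, 351562, 195302, 113932, 176532,
  195408, 257712, 101566, 270286, 257816, 132912, 257808, 192712, 99062, 192818, 195166,
  272782, 182842, 210182, 104062, 195406, 195466, 276442, 120432, 276432, 195062, 132662,
  199162, 273936, 214092, 132806, 195158, 179086, 210336, 116582, 257662, 182938, 120288,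
  276586, 117688, 211536, 117792, 192806, 257962, 195458, 120442, 176436, 272792, 207938,
  176592, 179192, 195322, 113942, 270442, 189062, 274032, 105312, 130312, 213936, 132808,
  195208, 191462, 197662, 214188, 116592, 285312, 197912, 260312, 116688, 272832, 197818,
  176688, 195416, 180192, 182782, 180182, 136562, 182832, 272938, 191566, 176542, 207936,
  117832, 182686, 276692, 270182, 114036, 192962, 120338, 291562, 197806, 276682, 120182,
  201562, 117686, 276588, 179088, 214032, 211432, 180286, 196562, 192662, 255312, 191712,
  117782, 199056, 182688, 198962, 135312, 272842, 191568, 197962, 210338, 191662, 199058,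
  214082, 194062, 176686, 192912, 197712, 198912, 192816, 213938, 197808]),
  (195168, [
  226562, 195456, 289212, 117842, 211588, 164062, 195262, 207688, 210286, 195168, 101556,
  176582, 101712, 289068, 101412, 270338, 191556, 274092, 117938, 180442, 272782, 101566,
  180338, 180288, 289058, 179036, 195362, 182936, 195310, 117792, 211538, 176438, 207832,
  270288, 272792, 113942, 214042, 289056, 199212, 257962, 101568, 179182, 191412, 288912,
  120286, 199068, 114088, 254062, 114086, 274188, 180192, 351562, 176436, 195408, 101662,
  211692, 257912, 99062, 116532, 272686, 210182, 289066, 195466, 276682, 180336, 199162,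
  101558, 288962, 195158, 210336, 195314, 272832, 179086, 214186, 182792, 120336, 117832,
  211586, 274042, 117936, 257818, 176532, 272936, 114038, 270336, 116542, 210192, 195322,
  270192, 114182, 270442, 132662, 195156, 192712, 105312, 257808, 132962, 101462, 195468,
  197912, 210432, 178942, 116582, 195458, 285312, 132816, 211442, 276536, 136562, 276538,
  176688, 179192, 129062, 191462, 176686, 117688, 180432, 39062, 195062, 270182, 207686,
  195216, 132808, 289162, 114036, 132912, 257816, 132712, 192808, 286562, 192962, 195406,
  116436, 214188, 178932, 291562, 195166, 195418, 120432, 276442, 120182, 195302, 257806,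
  199066, 117782, 182938, 257662, 195206, 210288, 179038, 272688, 132806, 214092, 276586,
  120288, 274082, 180286, 274186, 192662, 132818, 195218, 276692, 207782, 116686, 176592,
  207938, 210442, 195562, 270432, 114192, 189062, 117686, 292812, 255312, 182782, 257712,
  195208, 191558, 197806, 182842, 272938, 97812, 197816, 135312, 272842, 116438, 197962,
  207842, 195416, 211682, 213936, 211432, 261562, 213938, 116592, 191662, 207936, 176542,
  273938, 214032, 120442, 113932, 270286, 192818, 276588, 104062, 197662, 120192, 276432,
  201562, 274032, 120338, 210338, 182686, 180182, 211536, 196562, 192806, 130312, 191568,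
  273936, 198912, 214082, 199058, 260312, 116688, 191712, 197818, 179088, 191566, 198962,
  182688, 194062, 207792, 192816, 197808, 199056, 192912, 182832, 197712]),
  (289068, [
  195310, 101412, 101556, 180442, 180336, 195314, 226562, 270336, 210286, 289212, 195168,
  176438, 101568, 195456, 289068, 176582, 191412, 180432, 117842, 117938, 210182, 195418,
  180338, 211588, 195206, 210288, 164062, 120288, 195262, 211692, 211586, 270338, 176436,
  207832, 210432, 270442, 214186, 195156, 105312, 101558, 195468, 116438, 285312, 289056,
  214042, 199212, 176592, 191558, 176542, 117832, 274188, 195302, 270288, 132712, 132818,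
  117936, 132808, 192818, 210192, 272782, 272686, 195406, 101662, 120182, 180288, 136562,
  195218, 257806, 288962, 179036, 195362, 178932, 179038, 120286, 214188, 182792, 180192,
  180286, 211682, 117792, 195458, 207688, 116532, 207842, 176532, 210442, 272936, 195562,
  270432, 113942, 114182, 289066, 288912, 255312, 199068, 195208, 101566, 257818, 101712,
  135312, 116436, 272938, 178942, 101462, 191556, 195416, 274186, 214032, 199066, 214082,
  114088, 116688, 191566, 254062, 114038, 274092, 117688, 195322, 351562, 270182, 270286,
  257912, 195216, 132806, 207792, 132816, 195408, 257816, 192712, 192806, 99062, 132662,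
  272792, 120336, 272688, 197806, 289162, 132962, 120192, 276682, 276442, 195062, 195158,
  199162, 211442, 120338, 289058, 257662, 210336, 210338, 272832, 195166, 182936, 182782,
  214092, 180182, 211538, 117782, 286562, 195466, 257962, 120432, 207686, 116542, 176688,
  114086, 116686, 39062, 113932, 114192, 189062, 274042, 199056, 192808, 213938, 257808,
  257712, 191462, 197662, 182938, 116582, 191568, 197912, 197816, 179182, 272842, 104062,
  176686, 132912, 117686, 276536, 273936, 199058, 276586, 179192, 129062, 114036, 207938,
  274082, 213936, 120442, 270192, 207782, 192962, 182832, 197818, 291562, 276692, 276432,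
  201562, 211432, 182842, 179086, 276538, 273938, 211536, 196562, 192662, 192816, 191712,
  274032, 292812, 182686, 198962, 197808, 116592, 97812, 197962, 179088, 191662, 261562,
  276588, 194062, 207936, 192912, 197712, 198912, 130312, 182688, 260312]),
  (117938, [
  207832, 176438, 270338, 272686, 288962, 182792, 117936, 226562, 114182, 214186, 101412,
  195168, 178942, 289212, 120286, 289068, 114038, 351562, 195216, 257816, 117938, 179036,
  276442, 199066, 211588, 101662, 272688, 164062, 176532, 195310, 211586, 214042, 207688,
  211692, 195562, 210286, 195456, 192808, 257712, 257818, 197816, 101568, 132912, 211682,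
  101556, 276586, 210192, 195418, 191412, 274092, 276536, 274188, 195262, 117842, 101566,
  270336, 180442, 195166, 39062, 195408, 132808, 270432, 254062, 180338, 257662, 180336,
  120192, 289058, 136562, 191558, 214092, 195314, 179038, 176582, 182936, 178932, 195062,
  270182, 274186, 176436, 276692, 117792, 176688, 132816, 270288, 116686, 210432, 272936,
  289162, 113942, 270442, 132806, 117782, 288912, 182686, 199068, 191462, 197662, 272842,
  101712, 114088, 197912, 116438, 195218, 207938, 191556, 289056, 180432, 195206, 199212,
  195322, 179192, 129062, 210288, 176542, 213936, 180192, 116436, 214032, 211538, 207782,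
  272782, 132712, 192962, 114036, 114086, 257912, 210182, 211442, 286562, 270192, 99062,
  116532, 195362, 120288, 195458, 195406, 195466, 101462, 276682, 120182, 117688, 180288,
  257806, 117686, 182842, 199162, 195158, 132962, 120442, 214188, 113932, 272832, 257808,
  120336, 273938, 180286, 255312, 211536, 210336, 291562, 257962, 130312, 97812, 272792,
  207842, 191712, 176592, 192818, 191566, 207792, 195156, 274082, 274042, 105312, 276538,
  213938, 132818, 101558, 260312, 195468, 116542, 179182, 116582, 272938, 135312, 179088,
  285312, 176686, 192712, 195302, 211432, 261562, 214082, 194062, 114192, 189062, 195416,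
  292812, 117832, 179086, 132662, 192912, 289066, 276588, 104062, 120432, 197806, 199058,
  182832, 196562, 197712, 210338, 182782, 198912, 192806, 273936, 192662, 207686, 210442,
  274032, 199056, 195208, 198962, 182938, 116592, 191568, 197962, 197818, 191662, 276432,
  201562, 116688, 207936, 270286, 120338, 180182, 192816, 182688, 197808]),
  (211588, [
  210286, 195168, 191412, 101662, 179036, 180338, 211586, 272936, 226562, 195456, 199068,
  257818, 101568, 191556, 199212, 254062, 289068, 176532, 101566, 99062, 288962, 117938,
  164062, 180336, 272686, 211588, 179038, 117688, 211538, 117936, 195310, 257962, 272792,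
  270336, 207832, 195562, 132806, 288912, 101412, 176438, 101712, 195218, 289212, 289056,
  136562, 101556, 179192, 270338, 195418, 176436, 180432, 270182, 274188, 195216, 117842,
  114036, 192712, 180442, 214092, 289058, 291562, 207782, 114038, 195062, 180288, 117686,
  182842, 272782, 276586, 210288, 179086, 272688, 195314, 132662, 117832, 120288, 182792,
  195262, 192806, 117792, 176582, 274092, 207688, 195466, 270288, 132962, 210432, 114182,
  270432, 195322, 189062, 214186, 292812, 257912, 105312, 257712, 116542, 182938, 97812,
  132712, 210192, 195458, 197818, 178942, 285312, 132912, 195406, 211432, 120286, 195206,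
  176592, 114088, 210442, 272938, 192818, 182936, 180192, 120442, 276682, 351562, 289162,
  195408, 197816, 207686, 211692, 132816, 192808, 197912, 257816, 270286, 176542, 211442,
  214188, 116436, 276588, 210182, 211682, 114086, 120192, 195302, 201562, 276442, 273938,
  117782, 199066, 101462, 274082, 276538, 210336, 195362, 272832, 214042, 116532, 195158,
  120336, 257662, 196562, 192662, 274186, 116686, 179182, 113932, 289066, 132818, 176688,
  191566, 129062, 113942, 270192, 114192, 270442, 199162, 195156, 255312, 198962, 257808,
  260312, 272842, 213938, 101558, 191462, 195468, 132808, 135312, 191558, 197962, 116438,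
  191662, 130312, 195166, 214032, 276536, 180182, 197806, 116688, 207842, 207792, 192962,
  257806, 213936, 39062, 276692, 286562, 176686, 178932, 120338, 214082, 120432, 276432,
  120182, 273936, 104062, 194062, 199058, 261562, 211536, 180286, 274042, 195416, 191712,
  274032, 199056, 197662, 182686, 195208, 116592, 191568, 116582, 179088, 207938, 182782,
  182832, 210338, 207936, 192912, 197712, 198912, 192816, 182688, 197808])]

/-- `(c, b, p)`: the form `c` is the image of the form `p` under a generator of `G₁₀`. -/
def formTree : List (ℕ × Bool × ℕ) := [
  (180192, false, 196562), (192818, true, 196562), (273936, false, 180192),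
  (195168, true, 180192), (270192, false, 192818), (195314, true, 192818),
  (207792, true, 273936), (207686, false, 195168), (120288, true, 195168),
  (286562, false, 270192), (210288, true, 270192), (210192, false, 195314),
  (199058, true, 195314), (189062, false, 207792), (116688, true, 207792),
  (192808, false, 207686), (129062, true, 207686), (116436, false, 120288),
  (105312, true, 120288), (207938, true, 286562), (120432, true, 210288),
  (207832, false, 210192), (135312, true, 210192), (120192, false, 199058),
  (270288, false, 189062), (191558, true, 189062), (194062, false, 116688),
  (182832, true, 116688), (116582, true, 129062), (195302, false, 116436),
  (182686, false, 105312), (191568, false, 207938), (195458, true, 207938),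
  (104062, false, 120432), (180336, true, 120432), (120336, true, 135312),
  (195206, false, 120192), (195408, true, 270288), (210432, false, 194062),
  (197806, true, 194062), (201562, false, 182832), (197808, false, 116582),
  (192806, true, 195302), (199056, false, 182686), (195166, true, 182686),
  (285312, false, 191568), (197818, false, 195458), (274082, true, 195458),
  (261562, false, 180336), (195216, true, 120336), (116542, false, 195408),
  (180432, true, 195408), (195456, true, 210432), (195310, true, 197806),
  (199066, true, 201562), (180288, false, 192806), (192816, true, 199056),
  (210336, false, 197818), (199068, false, 274082), (274042, true, 261562),
  (191556, false, 116542), (182792, false, 180432), (255312, true, 180432),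
  (182938, false, 195456), (270336, true, 195456), (191566, true, 195310),
  (195322, true, 199066), (195418, true, 274042), (197816, false, 182938),
  (274188, false, 270336), (270432, false, 191566)]

/-- Words in the stabilizer of the first form. -/
def stabWords : List (ℕ × List Bool) := [
  (199056, []), (199066, [true, true, false, false, true, true, true, false, true, true]),
  (199068, [true, true, false, false, true, true, false, true, true]),
  (199058, [false, true, false, true, true, true, false, true])]

def memb : List ℕ → ℕ → Bool
  | [], _ => false
  | k :: t, n => bif Nat.beq k n then true else memb t n

def imageTest (v : ℕ) : List ℕ → List ℕ → Bool
  | [], _ => true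
  | _ :: _, [] => false
  | r :: l, n :: m => memb rootCodes n &&
      ((decV n).scale 2).eqb (V4.dblRefl (decV v) (decV r)) && imageTest v l m

def rootTreeTest : List ℕ → List (ℕ × ℕ × ℕ) → Bool
  | _, [] => true
  | acc, t :: l => memb genCodes t.2.1 && memb acc t.2.2 &&
      ((decV t.1).scale 2).eqb (V4.dblRefl (decV t.2.1) (decV t.2.2)) &&
      rootTreeTest (t.1 :: acc) l

def formTreeTest : List ℕ → List (ℕ × Bool × ℕ) → Bool
  | _, [] => true
  | acc, t :: l => memb acc t.2.2 &&
      ((lin t.1).scale 2).eqb ((lin t.2.2).step t.2.1) &&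
      formTreeTest (t.1 :: acc) l

def pairTest (c : ℕ) : Bool :=
  !((lin c).herm (lin c)).eqb ⟨4, 0, 0, 0⟩ ||
    (memb (196562 :: formTree.map Prod.fst) c &&
      (!((lin 196562).herm (lin c)).eqb ⟨2, 0, 0, 2⟩ || memb (stabWords.map Prod.fst) c))

def stabTest (t : ℕ × List Bool) : Bool :=
  ((lin 196562).run t.2).eqb ((lin 196562).scale (Int.ofNat (2 ^ t.2.length))) &&
  ((lin t.1).run t.2).eqb ((lin 199056).scale (Int.ofNat (2 ^ t.2.length)))

theorem images_check : (images.all fun t => imageTest t.1 rootCodes t.2) = true := by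
  decide +kernel

theorem images_gen_check : images.map Prod.fst = genCodes := by decide +kernel

theorem rootTree_check : rootTreeTest genCodes rootTree = true := by decide +kernel

theorem norm_check : (rootCodes.all fun c => ((decV c).herm (decV c)).eqb ⟨4, 0, 0, 0⟩) = true := by
  decide +kernel

theorem formTree_check : formTreeTest [196562] formTree = true := by decide +kernel

theorem pair_check : rootCodes.all pairTest = true := by decide +kernel

theorem stab_check : stabWords.all stabTest = true := by decide +kernel

/-! ### Evaluation in `ℂ` -/

/-- `e^{πi/6}`. -/
def z0 : ℂ := ⟨√3 / 2, 1 / 2⟩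

theorem z0_sq : z0 ^ 2 = Complex.I * z0 + 1 := by
  have h3 : (√3 : ℝ) ^ 2 = 3 := Real.sq_sqrt (by norm_num)
  apply Complex.ext
  · simp [z0, pow_two]; nlinarith
  · simp [z0, pow_two]; ring

theorem z0_conj : (starRingEnd ℂ) z0 = z0 - Complex.I := by
  apply Complex.ext
  · simp [z0]
  · simp [z0]; norm_num

theorem z0_cube : z0 ^ 3 = Complex.I := by
  linear_combination (z0 + Complex.I) * z0_sq + z0 * Complex.I_sq

theorem z0_four : z0 ^ 4 = z0 ^ 2 - 1 := by
  linear_combination z0 * z0_cube - z0_sq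

/-- Evaluation of the model ring in `ℂ`. -/
def ev (x : Z12) : ℂ := x.a + x.b * z0 + x.c * z0 ^ 2 + x.d * z0 ^ 3

theorem int_add (x y : ℤ) : Int.add x y = x + y := rfl
theorem int_sub (x y : ℤ) : Int.sub x y = x - y := rfl
theorem int_mul (x y : ℤ) : Int.mul x y = x * y := rfl
theorem int_neg (x : ℤ) : Int.neg x = -x := rfl

theorem ev_add (x y : Z12) : ev (x.add y) = ev x + ev y := by
  simp only [ev, Z12.add, int_add]; push_cast; ring

theorem ev_sub (x y : Z12) : ev (x.sub y) = ev x - ev y := by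
  simp only [ev, Z12.sub, int_sub]; push_cast; ring

theorem ev_scale (n : ℤ) (x : Z12) : ev (x.scale n) = n * ev x := by
  simp only [ev, Z12.scale, int_mul]; push_cast; ring

theorem ev_mul (x y : Z12) : ev (x.mul y) = ev x * ev y := by
  simp only [ev, Z12.mul, int_mul, int_add, int_sub]; push_cast
  linear_combination (-((x.b : ℂ) * y.d + x.c * y.c + x.d * y.b)
    - ((x.c : ℂ) * y.d + x.d * y.c) * z0 - (x.d : ℂ) * y.d * (z0 ^ 2 + 1)) * z0_four

theorem ev_conj (x : Z12) : ev x.conj = (starRingEnd ℂ) (ev x) := by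
  simp only [ev, Z12.conj, int_add, int_neg, map_add, map_mul, map_pow, map_intCast, z0_conj]
  push_cast
  rw [z0_cube]
  have h2 : z0 ^ 2 = Complex.I * z0 + 1 := z0_sq
  have e2 : (z0 - Complex.I) ^ 2 = 1 - z0 ^ 2 := by
    linear_combination 2 * h2 + Complex.I_sq
  have e3 : (z0 - Complex.I) ^ 3 = - Complex.I := by
    linear_combination z0_cube - 3 * Complex.I * h2 - Complex.I_sq * Complex.I
  rw [e2, e3]
  ring

theorem ev_inj {x y : Z12} (h : ev x = ev y) : x = y := by
  have key : ∀ p q : ℤ, (p : ℝ) + q * √3 = 0 → p = 0 ∧ q = 0 := by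
    intro p q hpq
    have hirr : Irrational (√3) := by
      have := Nat.Prime.irrational_sqrt (p := 3) (by norm_num)
      simpa using this
    by_cases hq : q = 0
    · subst hq; simp at hpq; exact ⟨hpq, rfl⟩
    · exfalso
      apply hirr
      refine ⟨(-p : ℚ) / q, ?_⟩
      have : (q : ℝ) ≠ 0 := by exact_mod_cast hq
      push_cast
      field_simp
      linarith
  have h' : ev (x.sub y) = 0 := by rw [ev_sub, h, sub_self]
  obtain ⟨a, b, c, d⟩ := x
  obtain ⟨a', b', c', d'⟩ := y
  simp only [ev, Z12.sub, int_sub, z0_cube, z0_sq] at h'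
  have hre := congrArg Complex.re h'
  have him := congrArg Complex.im h'
  simp [z0] at hre him
  have k1 := key (2 * (a - a') + (c - c')) (b - b') (by push_cast; linarith)
  have k2 := key ((b - b') + 2 * (d - d')) (c - c') (by push_cast; linarith)
  simp only [Z12.mk.injEq]
  omega

theorem ieq_eq {x y : ℤ} (h : Z12.ieq x y = true) : x = y := by
  cases x <;> cases y <;> simp [Z12.ieq] at h ⊢ <;> exact h

theorem ieq_self (x : ℤ) : Z12.ieq x x = true := by
  cases x <;> simp [Z12.ieq]

theorem Z12.eqb_eq {x y : Z12} (h : x.eqb y = true) : x = y := by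
  obtain ⟨a, b, c, d⟩ := x
  obtain ⟨a', b', c', d'⟩ := y
  simp only [Z12.eqb, Bool.and_eq_true] at h
  obtain ⟨⟨⟨h1, h2⟩, h3⟩, h4⟩ := h
  rw [Z12.mk.injEq]
  exact ⟨ieq_eq h1, ieq_eq h2, ieq_eq h3, ieq_eq h4⟩

theorem Z12.eqb_self (x : Z12) : x.eqb x = true := by
  simp [Z12.eqb, ieq_self]

theorem V4.eqb_eq {x y : V4} (h : x.eqb y = true) : x = y := by
  obtain ⟨a, b, c, d⟩ := x
  obtain ⟨a', b', c', d'⟩ := y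
  simp only [V4.eqb, Bool.and_eq_true] at h
  obtain ⟨⟨⟨h1, h2⟩, h3⟩, h4⟩ := h
  rw [V4.mk.injEq]
  exact ⟨Z12.eqb_eq h1, Z12.eqb_eq h2, Z12.eqb_eq h3, Z12.eqb_eq h4⟩

theorem V2.eqb_eq {x y : V2} (h : x.eqb y = true) : x = y := by
  obtain ⟨a, b⟩ := x
  obtain ⟨a', b'⟩ := y
  simp only [V2.eqb, Bool.and_eq_true] at h
  rw [V2.mk.injEq]
  exact ⟨Z12.eqb_eq h.1, Z12.eqb_eq h.2⟩

theorem memb_mem {l : List ℕ} {n : ℕ} (h : memb l n = true) : n ∈ l := by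
  induction l with
  | nil => simp [memb] at h
  | cons k t ih =>
    simp only [memb] at h
    by_cases hk : Nat.beq k n = true
    · have := Nat.eq_of_beq_eq_true hk
      simp [this]
    · simp only [Bool.not_eq_true] at hk
      rw [hk] at h
      exact List.mem_cons_of_mem _ (ih h)

def ev4 (x : V4) : Fin 4 → ℂ := ![ev x.p, ev x.q, ev x.r, ev x.s]
def ev2 (x : V2) : Fin 2 → ℂ := ![ev x.p, ev x.q]

theorem ev4_scale (n : ℤ) (x : V4) : ev4 (x.scale n) = (n : ℂ) • ev4 x := by
  ext i; fin_cases i <;> simp [ev4, V4.scale, ev_scale]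

theorem ev4_smul (k : Z12) (x : V4) : ev4 (x.smul k) = ev k • ev4 x := by
  ext i; fin_cases i <;> simp [ev4, V4.smul, ev_mul]

theorem ev4_add (x y : V4) : ev4 (x.add y) = ev4 x + ev4 y := by
  ext i; fin_cases i <;> simp [ev4, V4.add, ev_add]

theorem ev4_sub (x y : V4) : ev4 (x.sub y) = ev4 x - ev4 y := by
  ext i; fin_cases i <;> simp [ev4, V4.sub, ev_sub]

theorem ev4_herm (x y : V4) : ev (x.herm y) = herm (ev4 x) (ev4 y) := by
  simp [herm, ev4, Fin.sum_univ_four, V4.herm, ev_add, ev_mul, ev_conj]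

theorem ev2_scale (n : ℤ) (x : V2) : ev2 (x.scale n) = (n : ℂ) • ev2 x := by
  ext i; fin_cases i <;> simp [ev2, V2.scale, ev_scale]

theorem ev2_herm (x y : V2) : ev (x.herm y) = herm (ev2 x) (ev2 y) := by
  simp [herm, ev2, Fin.sum_univ_two, V2.herm, ev_add, ev_mul, ev_conj]

theorem herm_eq {N : ℕ} (x y : Fin N → ℂ) : herm x y = x ⬝ᵥ star y := by
  simp [herm, dotProduct]

/-! ### Reflections -/

theorem reflMat_eq {v : Fin 4 → ℂ} (hv : herm v v = 4) :
    reflMat v (-1) = 1 - (1 / 2 : ℂ) • Matrix.vecMulVec v (star v) := by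
  ext i j
  simp only [reflMat, hv, Matrix.of_apply, Matrix.sub_apply, Matrix.one_apply, Matrix.smul_apply,
    Matrix.vecMulVec_apply, smul_eq_mul, Pi.star_apply, starRingEnd_apply]
  ring

theorem reflMat_smul {N : ℕ} (k : ℂ) (hk : k ≠ 0) (v : Fin N → ℂ) (lam : ℂ) :
    reflMat (k • v) lam = reflMat v lam := by
  have hk' : (starRingEnd ℂ) k ≠ 0 := by simpa using hk
  have hh : herm (k • v) (k • v) = k * (starRingEnd ℂ) k * herm v v := by
    simp only [herm, Finset.mul_sum, Pi.smul_apply, smul_eq_mul, map_mul]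
    exact Finset.sum_congr rfl fun i _ => by ring
  ext i j
  simp only [reflMat, hh, Matrix.of_apply, Pi.smul_apply, smul_eq_mul, map_mul]
  congr 1
  rw [show (1 - lam) * (k * v i) * ((starRingEnd ℂ) k * (starRingEnd ℂ) (v j)) =
    (k * (starRingEnd ℂ) k) * ((1 - lam) * v i * (starRingEnd ℂ) (v j)) by ring]
  exact mul_div_mul_left _ _ (mul_ne_zero hk hk')

theorem reflMat_herm {v : Fin 4 → ℂ} (hv : herm v v = 4) :
    (reflMat v (-1))ᴴ = reflMat v (-1) := by
  rw [reflMat_eq hv]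
  simp [Matrix.conjTranspose_sub, Matrix.conjTranspose_smul, Matrix.conjTranspose_vecMulVec]

theorem reflMat_sq {v : Fin 4 → ℂ} (hv : herm v v = 4) :
    reflMat v (-1) * reflMat v (-1) = 1 := by
  have h4 : star v ⬝ᵥ v = 4 := by rw [dotProduct_comm, ← herm_eq, hv]
  have : Matrix.vecMulVec v (star v) * Matrix.vecMulVec v (star v) =
      (4 : ℂ) • Matrix.vecMulVec v (star v) := by
    rw [Matrix.vecMulVec_mul_vecMulVec, h4]
    ext i j; simp [Matrix.vecMulVec_apply]; ring
  rw [reflMat_eq hv, sub_mul, mul_sub, mul_sub]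
  simp only [one_mul, mul_one, Matrix.smul_mul, Matrix.mul_smul, this, smul_smul]
  module

theorem reflMat_conj {v a : Fin 4 → ℂ} (hv : herm v v = 4) (ha : herm a a = 4)
    (hw : herm (reflMat a (-1) *ᵥ v) (reflMat a (-1) *ᵥ v) = 4) :
    reflMat (reflMat a (-1) *ᵥ v) (-1) =
      reflMat a (-1) * reflMat v (-1) * reflMat a (-1) := by
  rw [reflMat_eq hw, reflMat_eq hv, mul_sub, sub_mul, mul_one, reflMat_sq ha]
  congr 1
  rw [Matrix.mul_smul, Matrix.smul_mul, Matrix.mul_vecMulVec, Matrix.vecMulVec_mul,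
    Matrix.star_mulVec, reflMat_herm ha]

theorem reflMat_mulVec {v : V4} (hv : herm (ev4 v) (ev4 v) = 4) (x : V4) :
    (2 : ℂ) • (reflMat (ev4 v) (-1) *ᵥ ev4 x) = ev4 (V4.dblRefl v x) := by
  rw [reflMat_eq hv, V4.dblRefl, ev4_sub, ev4_scale, ev4_smul, ev4_herm, herm_eq,
    Matrix.sub_mulVec, Matrix.one_mulVec, Matrix.smul_mulVec, Matrix.vecMulVec_mulVec,
    dotProduct_comm]
  ext i
  simp
  ring

/-! ### Invariance of the set of roots -/

theorem root_norm {c : ℕ} (hc : c ∈ rootCodes) : herm (ev4 (decV c)) (ev4 (decV c)) = 4 := by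
  have h := Z12.eqb_eq (List.all_eq_true.mp norm_check c hc)
  rw [← ev4_herm, h]
  simp [ev]

/-- Unitary matrices preserving the set of roots. -/
def Pres (M : Matrix (Fin 4) (Fin 4) ℂ) : Prop :=
  Mᴴ * M = 1 ∧ ∀ c ∈ rootCodes, ∃ c' ∈ rootCodes, M *ᵥ ev4 (decV c) = ev4 (decV c')

theorem Pres.one : Pres 1 := by
  refine ⟨by simp, fun c hc => ⟨c, hc, by simp⟩⟩

theorem Pres.mul {M N : Matrix (Fin 4) (Fin 4) ℂ} (hM : Pres M) (hN : Pres N) :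
    Pres (M * N) := by
  refine ⟨?_, fun c hc => ?_⟩
  · rw [Matrix.conjTranspose_mul, Matrix.mul_assoc, ← Matrix.mul_assoc Mᴴ, hM.1, Matrix.one_mul,
      hN.1]
  · obtain ⟨c', hc', h'⟩ := hN.2 c hc
    obtain ⟨c'', hc'', h''⟩ := hM.2 c' hc'
    exact ⟨c'', hc'', by rw [← Matrix.mulVec_mulVec, h', h'']⟩

theorem half_eq {v n r : ℕ} (hv : herm (ev4 (decV v)) (ev4 (decV v)) = 4)
    (h : ((decV n).scale 2).eqb (V4.dblRefl (decV v) (decV r)) = true) :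
    reflMat (ev4 (decV v)) (-1) *ᵥ ev4 (decV r) = ev4 (decV n) := by
  have h1 := V4.eqb_eq h
  have h2 := reflMat_mulVec hv (decV r)
  rw [← h1, ev4_scale] at h2
  have : (2 : ℂ) ≠ 0 := by norm_num
  push_cast at h2
  exact smul_right_injective _ this h2

theorem imageTest_sound (v : ℕ) : ∀ l m : List ℕ, imageTest v l m = true →
    ∀ r ∈ l, ∃ n ∈ rootCodes, ((decV n).scale 2).eqb (V4.dblRefl (decV v) (decV r)) = true
  | [], _, _ => by simp
  | _ :: _, [], h => by simp [imageTest] at h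
  | r :: l, n :: m, h => by
    simp only [imageTest, Bool.and_eq_true] at h
    intro r' hr'
    rcases List.mem_cons.mp hr' with rfl | hr'
    · exact ⟨n, memb_mem h.1.1, h.1.2⟩
    · exact imageTest_sound v l m h.2 r' hr'

theorem gen_sub {a : ℕ} (ha : a ∈ genCodes) : a ∈ rootCodes :=
  List.mem_append_left _ ha

theorem pres_gen {a : ℕ} (ha : a ∈ genCodes) : Pres (reflMat (ev4 (decV a)) (-1)) := by
  have hn := root_norm (gen_sub ha)
  refine ⟨by rw [reflMat_herm hn, reflMat_sq hn], fun c hc => ?_⟩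
  rw [← images_gen_check] at ha
  obtain ⟨t, ht, rfl⟩ := List.mem_map.mp ha
  obtain ⟨n, hn', h⟩ := imageTest_sound _ _ _ (List.all_eq_true.mp images_check t ht) c hc
  exact ⟨n, hn', half_eq hn h⟩

theorem rootTreeTest_sound : ∀ (l : List (ℕ × ℕ × ℕ)) (acc : List ℕ),
    rootTreeTest acc l = true → (∀ t ∈ l, t.1 ∈ rootCodes) →
    (∀ c ∈ acc, c ∈ rootCodes ∧ Pres (reflMat (ev4 (decV c)) (-1))) →
    ∀ t ∈ l, Pres (reflMat (ev4 (decV t.1)) (-1))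
  | [], _, _, _, _ => by simp
  | t :: l, acc, h, hl, hacc => by
    simp only [rootTreeTest, Bool.and_eq_true] at h
    obtain ⟨⟨⟨h1, h2⟩, h3⟩, h4⟩ := h
    have ha := memb_mem h1
    have hp := hacc _ (memb_mem h2)
    have hc := hl t (List.mem_cons_self ..)
    have e := half_eq (root_norm (gen_sub ha)) h3
    have hP : Pres (reflMat (ev4 (decV t.1)) (-1)) := by
      have hw := root_norm hc
      rw [← e] at hw ⊢
      rw [reflMat_conj (root_norm hp.1) (root_norm (gen_sub ha)) hw]
      exact ((pres_gen ha).mul hp.2).mul (pres_gen ha)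
    intro t' ht'
    rcases List.mem_cons.mp ht' with rfl | ht'
    · exact hP
    · refine rootTreeTest_sound l (t.1 :: acc) h4
        (fun t ht => hl t (List.mem_cons_of_mem _ ht)) ?_ t' ht'
      intro c hc'
      rcases List.mem_cons.mp hc' with rfl | hc'
      · exact ⟨hc, hP⟩
      · exact hacc c hc'

theorem pres_root {c : ℕ} (hc : c ∈ rootCodes) : Pres (reflMat (ev4 (decV c)) (-1)) := by
  rcases List.mem_append.mp hc with h | h
  · exact pres_gen h
  · obtain ⟨t, ht, rfl⟩ := List.mem_map.mp h
    refine rootTreeTest_sound rootTree genCodes rootTree_check ?_ ?_ t ht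
    · intro t ht
      exact List.mem_append_right _ (List.mem_map_of_mem ht)
    · exact fun c hc => ⟨gen_sub hc, pres_gen hc⟩

/-! ### The roots of `G₃₁` in the model -/

def mkV (f : Fin 4 → Z12) : V4 := ⟨f 0, f 1, f 2, f 3⟩

theorem ev4_mkV (f : Fin 4 → Z12) : ev4 (mkV f) = fun i => ev (f i) := by
  ext i; fin_cases i <;> simp [ev4, mkV]

def ipow : Fin 4 → Z12 := ![⟨1, 0, 0, 0⟩, ⟨0, 0, 0, 1⟩, ⟨-1, 0, 0, 0⟩, ⟨0, 0, 0, -1⟩]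

theorem ev_ipow (k : Fin 4) : ev (ipow k) = Complex.I ^ (k : ℕ) := by
  fin_cases k <;> simp [ipow, ev, z0_cube, Complex.I_pow_three]

/-- `(1 + i) (e_p - i^k e_q)`. -/
def rootA (p q k : Fin 4) : Fin 4 → Z12 := fun j =>
  if j = p then ⟨1, 0, 0, 1⟩ else if j = q then Z12.mul ⟨-1, 0, 0, -1⟩ (ipow k) else ⟨0, 0, 0, 0⟩
/-- `2 e_p`. -/
def rootB (p : Fin 4) : Fin 4 → Z12 := fun j => if j = p then ⟨2, 0, 0, 0⟩ else ⟨0, 0, 0, 0⟩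
def rootC (a b c d : Fin 4) : Fin 4 → Z12 := ![ipow a, ipow b, ipow c, ipow d]

theorem rootA_mem : ∀ p q k : Fin 4, p < q → ∃ c ∈ rootCodes, decV c = mkV (rootA p q k) := by
  decide +kernel
theorem rootB_mem : ∀ p : Fin 4, ∃ c ∈ rootCodes, decV c = mkV (rootB p) := by
  decide +kernel
theorem rootC_mem : ∀ a b c d : Fin 4, (a.val + b.val + c.val + d.val) % 2 = 0 →
    ∃ n ∈ rootCodes, decV n = mkV (rootC a b c d) := by
  decide +kernel

theorem ev_rootA (p q k : Fin 4) (h : p < q) : ev4 (mkV (rootA p q k)) = (1 + Complex.I) •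
    ((Pi.single p 1 : Fin 4 → ℂ) - Complex.I ^ (k : ℕ) • (Pi.single q 1 : Fin 4 → ℂ)) := by
  rw [ev4_mkV]
  ext j
  simp only [rootA, Pi.smul_apply, Pi.sub_apply, smul_eq_mul, Pi.single_apply]
  by_cases h1 : j = p
  · have h2 : j ≠ q := by rw [h1]; exact h.ne
    rw [if_pos h1, if_pos h1, if_neg h2]
    simp [ev, z0_cube]
  · rw [if_neg h1, if_neg h1]
    by_cases h2 : j = q
    · rw [if_pos h2, if_pos h2, ev_mul, ev_ipow]
      simp [ev, z0_cube]; ring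
    · rw [if_neg h2, if_neg h2]
      simp [ev]

theorem ev_rootB (p : Fin 4) : ev4 (mkV (rootB p)) = (2 : ℂ) • (Pi.single p 1 : Fin 4 → ℂ) := by
  rw [ev4_mkV]
  ext j
  simp only [rootB, Pi.smul_apply, smul_eq_mul, Pi.single_apply]
  split_ifs <;> simp [ev]

theorem ev_rootC (a b c d : Fin 4) : ev4 (mkV (rootC a b c d)) =
    ![Complex.I ^ (a : ℕ), Complex.I ^ (b : ℕ), Complex.I ^ (c : ℕ), Complex.I ^ (d : ℕ)] := by
  rw [ev4_mkV]
  ext j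
  fin_cases j <;> simp [rootC, ev_ipow]

theorem one_add_I_ne : (1 + Complex.I : ℂ) ≠ 0 := by
  intro h
  have := congrArg Complex.re h
  simp at this

theorem I_pow_mod (n : ℕ) : Complex.I ^ n = Complex.I ^ (n % 4) := by
  conv_lhs => rw [← Nat.div_add_mod n 4, pow_add, pow_mul, Complex.I_pow_four, one_pow, one_mul]

theorem pres_refl {v : Fin 4 → ℂ} (hv : v ∈ rootsG31) : Pres (reflMat v (-1)) := by
  rcases hv with (⟨p, q, k, hpq, hk, rfl⟩ | ⟨p, rfl⟩) | ⟨t, ht, rfl⟩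
  · obtain ⟨c, hc, e⟩ := rootA_mem p q ⟨k, hk⟩ hpq
    have := pres_root hc
    rwa [e, ev_rootA _ _ _ hpq, reflMat_smul _ one_add_I_ne] at this
  · obtain ⟨c, hc, e⟩ := rootB_mem p
    have := pres_root hc
    rwa [e, ev_rootB, reflMat_smul _ two_ne_zero] at this
  · have hlt : ∀ n : ℕ, n % 4 < 4 := fun n => Nat.mod_lt _ (by norm_num)
    obtain ⟨c, hc, e⟩ := rootC_mem ⟨t 0 % 4, hlt _⟩ ⟨t 1 % 4, hlt _⟩ ⟨t 2 % 4, hlt _⟩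
      ⟨t 3 % 4, hlt _⟩ (by
        have := Nat.even_iff.mp ht
        simp only
        omega)
    have := pres_root hc
    rw [e, ev_rootC] at this
    convert this using 2
    ext j
    fin_cases j <;> exact I_pow_mod _

theorem pres_closure {M : Matrix (Fin 4) (Fin 4) ℂ}
    (hM : M ∈ Submonoid.closure {M | ∃ v ∈ rootsG31, M = reflMat v (-1)}) : Pres M := by
  induction hM using Submonoid.closure_induction with
  | mem x hx => obtain ⟨v, hv, rfl⟩ := hx; exact pres_refl hv
  | one => exact Pres.one
  | mul x y _ _ hx hy => exact hx.mul hy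

/-! ### Words in reflections -/

/-- Product of the reflections with the given codes. -/
def reflProd (l : List ℕ) : Matrix (Fin 4) (Fin 4) ℂ :=
  (l.map fun n => reflMat (ev4 (decV n)) (-1)).prod

theorem reflProd_mulVec : ∀ (l : List ℕ), (∀ n ∈ l, n ∈ rootCodes) → ∀ x : V4,
    (2 : ℂ) ^ l.length • (reflProd l *ᵥ ev4 x) = ev4 (V4.runRefl l x)
  | [], _, x => by simp [reflProd, V4.runRefl]
  | n :: l, h, x => by
    have ih := reflProd_mulVec l (fun m hm => h m (List.mem_cons_of_mem _ hm)) x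
    have hn := root_norm (h n (List.mem_cons_self ..))
    rw [V4.runRefl, ← reflMat_mulVec hn, ← ih, Matrix.mulVec_smul, Matrix.mulVec_mulVec,
      smul_smul, List.length_cons, pow_succ']
    simp [reflProd]

/-! ### The embedding of `ℂ²` -/

def matF : Matrix (Fin 4) (Fin 2) ℂ := (Matrix.of ![ev4 phi0, ev4 phi1])ᵀ

theorem star_vecMul_matF (c : ℕ) : star (ev4 (decV c)) ᵥ* matF = ev2 (lin c) := by
  ext j
  fin_cases j
  · simp only [lin, ev2, ev4_herm, herm_eq]
    exact dotProduct_comm _ _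
  · simp only [lin, ev2, ev4_herm, herm_eq]
    exact dotProduct_comm _ _

def normF : ℂ := ev ⟨3, -2, 0, 1⟩

theorem normF_ne : normF ≠ 0 := by
  intro h
  have : ev ⟨3, -2, 0, 1⟩ = ev ⟨0, 0, 0, 0⟩ := by rw [← normF, h]; simp [ev]
  have := ev_inj this
  simp at this

theorem matF_herm : matFᴴ * matF = normF • (1 : Matrix (Fin 2) (Fin 2) ℂ) := by
  have e0 : ev ⟨0, 0, 0, 0⟩ = 0 := by simp [ev]
  have key : ∀ x y : V4, star (ev4 x) ⬝ᵥ ev4 y = ev (V4.herm y x) := by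
    intro x y; rw [ev4_herm, herm_eq, dotProduct_comm]
  have h00 : V4.herm phi0 phi0 = ⟨3, -2, 0, 1⟩ := by decide +kernel
  have h01 : V4.herm phi0 phi1 = ⟨0, 0, 0, 0⟩ := by decide +kernel
  have h10 : V4.herm phi1 phi0 = ⟨0, 0, 0, 0⟩ := by decide +kernel
  have h11 : V4.herm phi1 phi1 = ⟨3, -2, 0, 1⟩ := by decide +kernel
  ext i j
  fin_cases i <;> fin_cases j
  · refine (key phi0 phi0).trans ?_
    simp [h00, normF]
  · refine (key phi0 phi1).trans ?_
    simp [h10, e0]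
  · refine (key phi1 phi0).trans ?_
    simp [h01, e0]
  · refine (key phi1 phi1).trans ?_
    simp [h11, normF]

theorem form_image {M : Matrix (Fin 4) (Fin 4) ℂ} {M' : Matrix (Fin 2) (Fin 2) ℂ}
    (hM : Pres M) (h : M * matF = matF * M') {c : ℕ} (hc : c ∈ rootCodes) :
    ∃ c' ∈ rootCodes, ev2 (lin c') ᵥ* M' = ev2 (lin c) := by
  obtain ⟨c', hc', e⟩ := hM.2 c hc
  refine ⟨c', hc', ?_⟩
  rw [← star_vecMul_matF, ← star_vecMul_matF, Matrix.vecMul_vecMul, ← h, ← e, Matrix.star_mulVec,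
    Matrix.vecMul_vecMul, ← Matrix.mul_assoc, hM.1, Matrix.one_mul]

theorem form_unitary {M : Matrix (Fin 4) (Fin 4) ℂ} {M' : Matrix (Fin 2) (Fin 2) ℂ}
    (hM : Pres M) (h : M * matF = matF * M') : M' * M'ᴴ = 1 := by
  have h1 : (M * matF)ᴴ * (M * matF) = normF • (1 : Matrix (Fin 2) (Fin 2) ℂ) := by
    rw [Matrix.conjTranspose_mul, Matrix.mul_assoc, ← Matrix.mul_assoc Mᴴ, hM.1, Matrix.one_mul,
      matF_herm]
  rw [h, Matrix.conjTranspose_mul, Matrix.mul_assoc, ← Matrix.mul_assoc matFᴴ, matF_herm,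
    Matrix.smul_mul, Matrix.one_mul, Matrix.mul_smul] at h1
  have h2 : M'ᴴ * M' = 1 := smul_right_injective _ normF_ne h1
  exact mul_eq_one_comm.mp h2

theorem herm_vecMul {M' : Matrix (Fin 2) (Fin 2) ℂ} (h : M' * M'ᴴ = 1) (x y : Fin 2 → ℂ) :
    herm (x ᵥ* M') (y ᵥ* M') = herm x y := by
  rw [herm_eq, herm_eq, Matrix.star_vecMul, ← Matrix.dotProduct_mulVec, Matrix.mulVec_mulVec, h,
    Matrix.one_mulVec]

/-! ### The group `G₁₀` -/

def gen10 : Bool → Matrix (Fin 2) (Fin 2) ℂ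
  | false => (1 / 2 : ℂ) • !![ev ⟨1, 1, -1, 0⟩, ev ⟨-1, 1, 1, 0⟩;
      ev ⟨1, 1, -1, 0⟩, ev ⟨1, -1, -1, 0⟩]
  | true => (1 / 2 : ℂ) • !![ev ⟨1, 0, 0, 1⟩, ev ⟨-1, 0, 0, 1⟩;
      ev ⟨-1, 0, 0, 1⟩, ev ⟨1, 0, 0, 1⟩]

theorem ev2_step (x : V2) (t : Bool) : ev2 (x.step t) = (2 : ℂ) • (ev2 x ᵥ* gen10 t) := by
  cases t
  · ext j
    fin_cases j <;>
    simp [gen10, ev2, V2.step, ev_add, ev_mul, Matrix.vecMul, dotProduct, Fin.sum_univ_two] <;> ring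
  · ext j
    fin_cases j <;>
    simp [gen10, ev2, V2.step, ev_add, ev_mul, Matrix.vecMul, dotProduct, Fin.sum_univ_two] <;> ring

def wordM (w : List Bool) : Matrix (Fin 2) (Fin 2) ℂ := (w.map gen10).prod

theorem ev2_run : ∀ (w : List Bool) (x : V2),
    ev2 (x.run w) = (2 : ℂ) ^ w.length • (ev2 x ᵥ* wordM w)
  | [], x => by simp [V2.run, wordM]
  | t :: w, x => by
    rw [V2.run, ev2_run w, ev2_step, Matrix.smul_vecMul, smul_smul, Matrix.vecMul_vecMul,
      List.length_cons, pow_succ]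
    simp [wordM]

theorem run_eq {w : List Bool} {x y : V2}
    (h : (x.run w).eqb (y.scale (Int.ofNat (2 ^ w.length))) = true) :
    ev2 x ᵥ* wordM w = ev2 y := by
  have h1 := congrArg ev2 (V2.eqb_eq h)
  rw [ev2_run, ev2_scale] at h1
  have h2 : ((Int.ofNat (2 ^ w.length) : ℤ) : ℂ) = 2 ^ w.length := by
    simp
  rw [h2] at h1
  exact smul_right_injective _ (pow_ne_zero _ two_ne_zero) h1

def grp10 : Submonoid (Matrix (Fin 2) (Fin 2) ℂ) := Submonoid.closure {gen10 false, gen10 true}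

theorem gen10_mem (t : Bool) : gen10 t ∈ grp10 := by
  apply Submonoid.subset_closure
  cases t <;> simp

theorem wordM_mem (w : List Bool) : wordM w ∈ grp10 := by
  apply Submonoid.list_prod_mem
  intro x hx
  obtain ⟨t, _, rfl⟩ := List.mem_map.mp hx
  exact gen10_mem t

theorem vecMul_cancel {x y p q : Fin 2 → ℂ} {A B : Matrix (Fin 2) (Fin 2) ℂ}
    (hxA : x ᵥ* A = p) (hxB : x ᵥ* B = p) (hyA : y ᵥ* A = q) (hyB : y ᵥ* B = q)
    (hdet : (Matrix.of ![p, q]).det ≠ 0) : A = B := by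
  have row : ∀ C : Matrix (Fin 2) (Fin 2) ℂ, x ᵥ* C = p → y ᵥ* C = q →
      Matrix.of ![x, y] * C = Matrix.of ![p, q] := by
    intro C hx hy
    ext i j
    fin_cases i
    · exact congrFun hx j
    · exact congrFun hy j
  have hA := row A hxA hyA
  have hB := row B hxB hyB
  have hd : (Matrix.of ![x, y]).det ≠ 0 := by
    intro h0
    rw [← hA, Matrix.det_mul, h0, zero_mul] at hdet
    exact hdet rfl
  have hu : IsUnit (Matrix.of ![x, y]) := (Matrix.isUnit_iff_isUnit_det _).mpr hd.isUnit
  exact hu.mul_left_cancel (hA.trans hB.symm)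

theorem wordM_eq_one {w : List Bool}
    (h1 : (V2.run ⟨⟨1, 0, 0, 0⟩, ⟨0, 0, 0, 0⟩⟩ w).eqb
      (V2.scale (Int.ofNat (2 ^ w.length)) ⟨⟨1, 0, 0, 0⟩, ⟨0, 0, 0, 0⟩⟩) = true)
    (h2 : (V2.run ⟨⟨0, 0, 0, 0⟩, ⟨1, 0, 0, 0⟩⟩ w).eqb
      (V2.scale (Int.ofNat (2 ^ w.length)) ⟨⟨0, 0, 0, 0⟩, ⟨1, 0, 0, 0⟩⟩) = true) :
    wordM w = 1 := by
  refine vecMul_cancel (run_eq h1) (Matrix.vecMul_one _) (run_eq h2) (Matrix.vecMul_one _) ?_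
  simp [Matrix.det_fin_two, ev2, ev]

theorem grp10_inv {h : Matrix (Fin 2) (Fin 2) ℂ} (hh : h ∈ grp10) : ∃ h' ∈ grp10, h' * h = 1 := by
  induction hh using Submonoid.closure_induction with
  | mem x hx =>
    rcases hx with rfl | rfl
    · refine ⟨wordM [false, false], wordM_mem _, ?_⟩
      have : wordM [false, false, false] = 1 :=
        wordM_eq_one (by decide +kernel) (by decide +kernel)
      rw [← this]; simp [wordM, mul_assoc]
    · refine ⟨wordM [true, true, true], wordM_mem _, ?_⟩
      have : wordM [true, true, true, true] = 1 :=
        wordM_eq_one (by decide +kernel) (by decide +kernel)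
      rw [← this]; simp [wordM, mul_assoc]
  | one => exact ⟨1, one_mem _, by simp⟩
  | mul x y _ _ hx hy =>
    obtain ⟨x', hx', ex⟩ := hx
    obtain ⟨y', hy', ey⟩ := hy
    refine ⟨y' * x', mul_mem hy' hx', ?_⟩
    rw [mul_assoc, ← mul_assoc x', ex, one_mul, ey]

theorem formTreeTest_sound : ∀ (l : List (ℕ × Bool × ℕ)) (acc : List ℕ),
    formTreeTest acc l = true →
    (∀ c ∈ acc, ∃ h ∈ grp10, ev2 (lin 196562) ᵥ* h = ev2 (lin c)) →
    ∀ t ∈ l, ∃ h ∈ grp10, ev2 (lin 196562) ᵥ* h = ev2 (lin t.1)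
  | [], _, _, _ => by simp
  | t :: l, acc, h, hacc => by
    simp only [formTreeTest, Bool.and_eq_true] at h
    obtain ⟨⟨h1, h2⟩, h3⟩ := h
    obtain ⟨k, hk, e⟩ := hacc _ (memb_mem h1)
    have hP : ∃ h ∈ grp10, ev2 (lin 196562) ᵥ* h = ev2 (lin t.1) := by
      refine ⟨k * gen10 t.2.1, mul_mem hk (gen10_mem _), ?_⟩
      rw [← Matrix.vecMul_vecMul, e]
      have h4 := congrArg ev2 (V2.eqb_eq h2)
      rw [ev2_step, ev2_scale] at h4
      push_cast at h4
      exact (smul_right_injective _ two_ne_zero h4).symm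
    intro t' ht'
    rcases List.mem_cons.mp ht' with rfl | ht'
    · exact hP
    · refine formTreeTest_sound l (t.1 :: acc) h3 ?_ t' ht'
      intro c hc'
      rcases List.mem_cons.mp hc' with rfl | hc'
      · exact hP
      · exact hacc c hc'

theorem form_trans {c : ℕ} (hc : c ∈ 196562 :: formTree.map Prod.fst) :
    ∃ h ∈ grp10, ev2 (lin 196562) ᵥ* h = ev2 (lin c) := by
  rcases List.mem_cons.mp hc with rfl | hc
  · exact ⟨1, one_mem _, Matrix.vecMul_one _⟩
  · obtain ⟨t, ht, rfl⟩ := List.mem_map.mp hc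
    refine formTreeTest_sound _ _ formTree_check ?_ t ht
    intro c hc
    rw [List.mem_singleton.mp hc]
    exact ⟨1, one_mem _, Matrix.vecMul_one _⟩

/-! ### The group `G₃₁` -/

def grp31 : Submonoid (Matrix (Fin 4) (Fin 4) ℂ) :=
  Submonoid.closure {M | ∃ v ∈ rootsG31, M = reflMat v (-1)}

theorem reflA_mem (p q k : Fin 4) (h : p < q) {c : ℕ} (e : decV c = mkV (rootA p q k)) :
    reflMat (ev4 (decV c)) (-1) ∈ grp31 := by
  rw [e, ev_rootA _ _ _ h, reflMat_smul _ one_add_I_ne]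
  exact Submonoid.subset_closure ⟨_, Or.inl (Or.inl ⟨p, q, k, h, k.2, rfl⟩), rfl⟩

theorem reflC_mem (a b c d : Fin 4) (h : (a.val + b.val + c.val + d.val) % 2 = 0) {n : ℕ}
    (e : decV n = mkV (rootC a b c d)) : reflMat (ev4 (decV n)) (-1) ∈ grp31 := by
  rw [e, ev_rootC]
  refine Submonoid.subset_closure ⟨_, Or.inr ⟨![a.val, b.val, c.val, d.val], ?_, ?_⟩, rfl⟩
  · exact Nat.even_iff.mpr h
  · ext j; fin_cases j <;> rfl

def lift10 : Bool → List ℕ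
  | false => [101568, 276538]
  | true => [191568, 179088, 272688]

theorem lift10_mem (t : Bool) : reflProd (lift10 t) ∈ grp31 := by
  apply Submonoid.list_prod_mem
  intro x hx
  cases t <;> simp only [lift10, List.map_cons, List.map_nil, List.mem_cons, List.not_mem_nil,
    or_false] at hx
  · rcases hx with rfl | rfl
    · exact reflA_mem 0 3 0 (by decide) (by decide +kernel)
    · exact reflC_mem 0 2 1 1 (by decide) (by decide +kernel)
  · rcases hx with rfl | rfl | rfl
    · exact reflA_mem 0 2 0 (by decide) (by decide +kernel)
    · exact reflC_mem 0 0 2 2 (by decide) (by decide +kernel)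
    · exact reflC_mem 0 3 2 1 (by decide) (by decide +kernel)

theorem lift_col {l : List ℕ} (hl : ∀ n ∈ l, memb rootCodes n = true) {x : V4} {p q : Z12}
    (h : ((V4.runRefl l x).scale 2).eqb
      (((phi0.smul p).add (phi1.smul q)).scale (Int.ofNat (2 ^ l.length))) = true) :
    reflProd l *ᵥ ev4 x = (1 / 2 : ℂ) • (ev p • ev4 phi0 + ev q • ev4 phi1) := by
  have h1 := congrArg ev4 (V4.eqb_eq h)
  rw [ev4_scale, ev4_scale, ev4_add, ev4_smul, ev4_smul,
    ← reflProd_mulVec l (fun n hn => memb_mem (hl n hn))] at h1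
  have h2 : ((Int.ofNat (2 ^ l.length) : ℤ) : ℂ) = 2 ^ l.length := by
    simp
  rw [h2, smul_comm] at h1
  have h3 := smul_right_injective _ (pow_ne_zero l.length (two_ne_zero (α := ℂ))) h1
  rw [← h3]
  push_cast
  rw [smul_smul]
  norm_num

theorem lift10_eq (t : Bool) : reflProd (lift10 t) * matF = matF * gen10 t := by
  have col : ∀ (M : Matrix (Fin 4) (Fin 4) ℂ) (N : Matrix (Fin 2) (Fin 2) ℂ),
      M *ᵥ ev4 phi0 = N 0 0 • ev4 phi0 + N 1 0 • ev4 phi1 →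
      M *ᵥ ev4 phi1 = N 0 1 • ev4 phi0 + N 1 1 • ev4 phi1 → M * matF = matF * N := by
    intro M N h0 h1
    ext i j
    have hr : (matF * N) i j = N 0 j * ev4 phi0 i + N 1 j * ev4 phi1 i := by
      simp [Matrix.mul_apply, Fin.sum_univ_two, matF]; ring
    rw [hr]
    fin_cases j
    · exact congrFun h0 i
    · exact congrFun h1 i
  cases t
  · apply col
    · rw [lift_col (p := ⟨1, 1, -1, 0⟩) (q := ⟨1, 1, -1, 0⟩) (by decide +kernel)
        (by decide +kernel)]
      simp [gen10, smul_smul]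
    · rw [lift_col (p := ⟨-1, 1, 1, 0⟩) (q := ⟨1, -1, -1, 0⟩) (by decide +kernel)
        (by decide +kernel)]
      simp [gen10, smul_smul]
  · apply col
    · rw [lift_col (p := ⟨1, 0, 0, 1⟩) (q := ⟨-1, 0, 0, 1⟩) (by decide +kernel)
        (by decide +kernel)]
      simp [gen10, smul_smul]
    · rw [lift_col (p := ⟨-1, 0, 0, 1⟩) (q := ⟨1, 0, 0, 1⟩) (by decide +kernel)
        (by decide +kernel)]
      simp [gen10, smul_smul]

theorem grp10_lift {h : Matrix (Fin 2) (Fin 2) ℂ} (hh : h ∈ grp10) :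
    ∃ M ∈ grp31, M * matF = matF * h := by
  induction hh using Submonoid.closure_induction with
  | mem x hx =>
    rcases hx with rfl | rfl
    · exact ⟨_, lift10_mem false, lift10_eq false⟩
    · exact ⟨_, lift10_mem true, lift10_eq true⟩
  | one => exact ⟨1, one_mem _, by simp⟩
  | mul x y _ _ hx hy =>
    obtain ⟨X, hX, ex⟩ := hx
    obtain ⟨Y, hY, ey⟩ := hy
    refine ⟨X * Y, mul_mem hX hY, ?_⟩
    rw [Matrix.mul_assoc, ey, ← Matrix.mul_assoc, ex, Matrix.mul_assoc]

theorem pair_cases {c : ℕ} (hc : c ∈ rootCodes) (hn : (lin c).herm (lin c) = ⟨4, 0, 0, 0⟩) :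
    c ∈ 196562 :: formTree.map Prod.fst ∧
      ((lin 196562).herm (lin c) = ⟨2, 0, 0, 2⟩ → c ∈ stabWords.map Prod.fst) := by
  have h := List.all_eq_true.mp pair_check c hc
  rw [pairTest, hn, Z12.eqb_self] at h
  simp only [Bool.not_true, Bool.false_or, Bool.and_eq_true] at h
  refine ⟨memb_mem h.1, fun h2 => ?_⟩
  have h3 := h.2
  rw [h2, Z12.eqb_self] at h3
  simp only [Bool.not_true, Bool.false_or] at h3
  exact memb_mem h3

theorem lift_mem_grp10 {M : Matrix (Fin 4) (Fin 4) ℂ} {M' : Matrix (Fin 2) (Fin 2) ℂ}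
    (hM : M ∈ grp31) (e : M * matF = matF * M') : M' ∈ grp10 := by
  have hP : Pres M := pres_closure hM
  have m1 : 196562 ∈ rootCodes := memb_mem (by decide +kernel)
  have m2 : 199056 ∈ rootCodes := memb_mem (by decide +kernel)
  have n1 : (lin 196562).herm (lin 196562) = ⟨4, 0, 0, 0⟩ := by decide +kernel
  have n2 : (lin 199056).herm (lin 199056) = ⟨4, 0, 0, 0⟩ := by decide +kernel
  have n12 : (lin 196562).herm (lin 199056) = ⟨2, 0, 0, 2⟩ := by decide +kernel
  obtain ⟨c, hc, ec⟩ := form_image hP e m1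
  have hcn : (lin c).herm (lin c) = ⟨4, 0, 0, 0⟩ := by
    apply ev_inj
    rw [ev2_herm, ← herm_vecMul (form_unitary hP e), ec, ← ev2_herm, n1]
  obtain ⟨h, hh, eh⟩ := form_trans (pair_cases hc hcn).1
  obtain ⟨H, hH, eH⟩ := grp10_lift hh
  have hN : H * M ∈ grp31 := mul_mem hH hM
  have eN : H * M * matF = matF * (h * M') := by
    rw [Matrix.mul_assoc, e, ← Matrix.mul_assoc, eH, Matrix.mul_assoc]
  have hPN : Pres (H * M) := pres_closure hN
  have fix1 : ev2 (lin 196562) ᵥ* (h * M') = ev2 (lin 196562) := by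
    rw [← Matrix.vecMul_vecMul, eh, ec]
  obtain ⟨d, hd, ed⟩ := form_image hPN eN m2
  have hdn : (lin d).herm (lin d) = ⟨4, 0, 0, 0⟩ := by
    apply ev_inj
    rw [ev2_herm, ← herm_vecMul (form_unitary hPN eN), ed, ← ev2_herm, n2]
  have hd12 : (lin 196562).herm (lin d) = ⟨2, 0, 0, 2⟩ := by
    apply ev_inj
    rw [ev2_herm, ← herm_vecMul (form_unitary hPN eN), ed, fix1, ← ev2_herm, n12]
  obtain ⟨t, ht, rfl⟩ := List.mem_map.mp ((pair_cases hd hdn).2 hd12)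
  have hs := List.all_eq_true.mp stab_check t ht
  simp only [stabTest, Bool.and_eq_true] at hs
  have hw : h * M' = wordM t.2 := by
    refine vecMul_cancel fix1 (run_eq hs.1) ed (run_eq hs.2) ?_
    have l1 : lin 196562 = ⟨⟨2, 0, 0, 0⟩, ⟨0, 0, 0, 0⟩⟩ := by decide +kernel
    have l2 : lin 199056 = ⟨⟨1, 0, 0, -1⟩, ⟨1, 0, 0, -1⟩⟩ := by decide +kernel
    rw [l1, l2]
    intro h0
    have h1 := congrArg Complex.re h0
    simp [Matrix.det_fin_two, ev2, ev, z0_cube] at h1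
  obtain ⟨h', hh', eh'⟩ := grp10_inv hh
  have : M' = h' * wordM t.2 := by rw [← hw, ← mul_assoc, eh', one_mul]
  rw [this]
  exact mul_mem hh' (wordM_mem _)

/-! ### The regular element -/

def gWord : List ℕ := [226562, 195168, 289068, 117938, 211588]

def gSq : Matrix (Fin 4) (Fin 4) ℂ :=
  (1 / 2 : ℂ) • !![1 + Complex.I, -1 - Complex.I, 0, 0; -1 + Complex.I, -1 + Complex.I, 0, 0;
    0, 0, 1 + Complex.I, -1 - Complex.I; 0, 0, -1 + Complex.I, -1 + Complex.I]

theorem refl_code {c : ℕ} {v : Fin 4 → ℂ} {x : V4} (k : ℂ) (hk : k ≠ 0) (e : decV c = x)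
    (h : ev4 x = k • v) : reflMat v (-1) = reflMat (ev4 (decV c)) (-1) := by
  rw [e, h, reflMat_smul k hk]

theorem g_eq : reflMat ![0, 0, 0, 1] (-1) * reflMat ![1, -1, 0, 0] (-1) *
      reflMat ![1, 0, 0, 1] (-1) *
      reflMat ![1, Complex.I, 1, -Complex.I] (-1) * reflMat ![1, 1, 1, 1] (-1) =
    reflProd gWord := by
  rw [refl_code (c := 226562) (v := ![0, 0, 0, 1])
      (x := ⟨⟨0, 0, 0, 0⟩, ⟨0, 0, 0, 0⟩, ⟨0, 0, 0, 0⟩, ⟨2, 0, 0, 0⟩⟩) 2 two_ne_zero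
      (by decide +kernel) (by ext i; fin_cases i <;> simp [ev4, ev]),
    refl_code (c := 195168) (v := ![1, -1, 0, 0])
      (x := ⟨⟨1, 0, 0, 1⟩, ⟨-1, 0, 0, -1⟩, ⟨0, 0, 0, 0⟩, ⟨0, 0, 0, 0⟩⟩) _ one_add_I_ne
      (by decide +kernel) (by ext i; fin_cases i <;> simp [ev4, ev, z0_cube]; ring),
    refl_code (c := 289068) (v := ![1, 0, 0, 1])
      (x := ⟨⟨1, 0, 0, 1⟩, ⟨0, 0, 0, 0⟩, ⟨0, 0, 0, 0⟩, ⟨1, 0, 0, 1⟩⟩) _ one_add_I_ne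
      (by decide +kernel) (by ext i; fin_cases i <;> simp [ev4, ev, z0_cube]),
    refl_code (c := 117938) (v := ![1, Complex.I, 1, -Complex.I])
      (x := ⟨⟨1, 0, 0, 0⟩, ⟨0, 0, 0, 1⟩, ⟨1, 0, 0, 0⟩, ⟨0, 0, 0, -1⟩⟩) 1 one_ne_zero
      (by decide +kernel) (by ext i; fin_cases i <;> simp [ev4, ev, z0_cube]),
    refl_code (c := 211588) (v := ![1, 1, 1, 1])
      (x := ⟨⟨1, 0, 0, 0⟩, ⟨1, 0, 0, 0⟩, ⟨1, 0, 0, 0⟩, ⟨1, 0, 0, 0⟩⟩) 1 one_ne_zero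
      (by decide +kernel) (by ext i; fin_cases i <;> simp [ev4, ev])]
  simp [reflProd, gWord, mul_assoc]

theorem g_col {x y : V4}
    (h : (V4.runRefl (gWord ++ gWord) x).eqb (y.scale 512) = true) :
    (reflProd gWord) ^ 2 *ᵥ ev4 x = (1 / 2 : ℂ) • ev4 y := by
  have h0 : ∀ n ∈ gWord ++ gWord, memb rootCodes n = true := by decide +kernel
  have h1 := congrArg ev4 (V4.eqb_eq h)
  rw [ev4_scale, ← reflProd_mulVec _ (fun n hn => memb_mem (h0 n hn))] at h1
  have h2 : reflProd (gWord ++ gWord) = (reflProd gWord) ^ 2 := by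
    simp [reflProd, pow_two]
  rw [h2] at h1
  have h3 : ((2 : ℂ) ^ (gWord ++ gWord).length) = 1024 := by
    simp [gWord]; norm_num
  rw [h3] at h1
  have h4 : (1024 : ℂ) • ((reflProd gWord) ^ 2 *ᵥ ev4 x) =
      (1024 : ℂ) • ((1 / 2 : ℂ) • ev4 y) := by
    rw [h1, smul_smul]; norm_num
  exact smul_right_injective _ (by norm_num) h4

theorem gSq_eq : (reflProd gWord) ^ 2 = gSq := by
  have c0 := g_col (x := ⟨⟨1, 0, 0, 0⟩, ⟨0, 0, 0, 0⟩, ⟨0, 0, 0, 0⟩, ⟨0, 0, 0, 0⟩⟩)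
    (y := ⟨⟨1, 0, 0, 1⟩, ⟨-1, 0, 0, 1⟩, ⟨0, 0, 0, 0⟩, ⟨0, 0, 0, 0⟩⟩) (by decide +kernel)
  have c1 := g_col (x := ⟨⟨0, 0, 0, 0⟩, ⟨1, 0, 0, 0⟩, ⟨0, 0, 0, 0⟩, ⟨0, 0, 0, 0⟩⟩)
    (y := ⟨⟨-1, 0, 0, -1⟩, ⟨-1, 0, 0, 1⟩, ⟨0, 0, 0, 0⟩, ⟨0, 0, 0, 0⟩⟩) (by decide +kernel)
  have c2 := g_col (x := ⟨⟨0, 0, 0, 0⟩, ⟨0, 0, 0, 0⟩, ⟨1, 0, 0, 0⟩, ⟨0, 0, 0, 0⟩⟩)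
    (y := ⟨⟨0, 0, 0, 0⟩, ⟨0, 0, 0, 0⟩, ⟨1, 0, 0, 1⟩, ⟨-1, 0, 0, 1⟩⟩) (by decide +kernel)
  have c3 := g_col (x := ⟨⟨0, 0, 0, 0⟩, ⟨0, 0, 0, 0⟩, ⟨0, 0, 0, 0⟩, ⟨1, 0, 0, 0⟩⟩)
    (y := ⟨⟨0, 0, 0, 0⟩, ⟨0, 0, 0, 0⟩, ⟨-1, 0, 0, -1⟩, ⟨-1, 0, 0, 1⟩⟩) (by decide +kernel)
  generalize (reflProd gWord) ^ 2 = A at c0 c1 c2 c3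
  ext i j
  have d0 := congrFun c0 i
  have d1 := congrFun c1 i
  have d2 := congrFun c2 i
  have d3 := congrFun c3 i
  simp [ev4, ev, Matrix.mulVec, dotProduct, Fin.sum_univ_four, z0_cube] at d0 d1 d2 d3
  fin_cases j
  · fin_cases i <;> simp at d0 <;> simp [gSq, d0]
  · fin_cases i <;> simp at d1 <;> simp [gSq, d1] <;> ring
  · fin_cases i <;> simp at d2 <;> simp [gSq, d2]
  · fin_cases i <;> simp at d3 <;> simp [gSq, d3] <;> ring

theorem matF_mulVec (t : Fin 2 → ℂ) :
    matF *ᵥ t = ![-t 1, (z0 - z0 ^ 2) * t 1, t 0, (z0 ^ 2 - z0) * t 0] := by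
  ext i
  fin_cases i <;>
  simp [matF, Matrix.mulVec, dotProduct, Fin.sum_univ_two, ev4, phi0, phi1, ev,
    -mul_eq_mul_right_iff] <;> ring

theorem range_matF : LinearMap.range matF.mulVecLin = eigSpace gSq z0 := by
  have hI := Complex.I_sq
  have hz := z0_sq
  ext x
  simp only [LinearMap.mem_range, eigSpace, Module.End.mem_eigenspace_iff, Matrix.mulVecLin_apply]
  constructor
  · rintro ⟨t, rfl⟩
    rw [matF_mulVec]
    ext i
    fin_cases i
    · simp [gSq, Matrix.mulVec, dotProduct, Fin.sum_univ_four]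
      rw [← z0_cube]; linear_combination (-(1 / 2) * (1 - z0) * t 1) * z0_four
    · simp [gSq, Matrix.mulVec, dotProduct, Fin.sum_univ_four]
      rw [← z0_cube]; linear_combination (-(1 / 2) * (z0 - 1) * t 1) * z0_four
    · simp [gSq, Matrix.mulVec, dotProduct, Fin.sum_univ_four]
      rw [← z0_cube]; linear_combination ((1 / 2) * (1 - z0) * t 0) * z0_four
    · simp [gSq, Matrix.mulVec, dotProduct, Fin.sum_univ_four]
      rw [← z0_cube]; linear_combination ((1 / 2) * (z0 - 1) * t 0) * z0_four
  · intro h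
    refine ⟨![x 2, -x 0], ?_⟩
    rw [matF_mulVec]
    have h0 := congrFun h 0
    have h2 := congrFun h 2
    simp [gSq, Matrix.mulVec, dotProduct, Fin.sum_univ_four] at h0 h2
    ext i
    fin_cases i
    · simp
    · simp
      linear_combination (1 - Complex.I) * h0 + x 0 * hz + (1 / 2) * (x 0 - x 1) * hI
    · simp
    · simp
      linear_combination (1 - Complex.I) * h2 + x 2 * hz + (1 / 2) * (x 2 - x 3) * hI

theorem matF_injective : Function.Injective matF.mulVecLin := by
  intro x y h
  have h1 := congrArg (fun v => matFᴴ *ᵥ v) h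
  simp only [Matrix.mulVecLin_apply, Matrix.mulVec_mulVec, matF_herm, Matrix.smul_mulVec,
    Matrix.one_mulVec] at h1
  exact smul_right_injective _ normF_ne h1

theorem exp_pi_six : Complex.exp (Real.pi * Complex.I / 6) = z0 := by
  rw [show (Real.pi * Complex.I / 6 : ℂ) = ((Real.pi / 6 : ℝ) : ℂ) * Complex.I by push_cast; ring,
    Complex.exp_mul_I, ← Complex.ofReal_cos, ← Complex.ofReal_sin, Real.cos_pi_div_six,
    Real.sin_pi_div_six]
  apply Complex.ext <;> simp [z0]

/-- The `12`-reflection subquotient of `G₃₁` is isomorphic to `G₁₀`: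
with `ζ = e^{πi/12}`, `ω = e^{2πi/3}`, `g` the product of the five listed reflections
of `G₃₁`, and `E` the `ζ^2`-eigenspace of `g^2` (a `2`-dimensional subspace), there is
a `ℂ`-linear isomorphism `ψ : E ≅ ℂ^2` conjugating `π_E(N_E)` onto `G₁₀`. -/
theorem statement_18 (ζ ω : ℂ) (hζ : ζ = Complex.exp (Real.pi * Complex.I / 12))
    (hω : ω = Complex.exp (2 * Real.pi * Complex.I / 3))
    (G31 : Submonoid (Matrix (Fin 4) (Fin 4) ℂ))
    (hG31 : G31 = Submonoid.closure {M | ∃ v ∈ rootsG31, M = reflMat v (-1)})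
    (g : Matrix (Fin 4) (Fin 4) ℂ)
    (hg : g = reflMat ![0, 0, 0, 1] (-1) * reflMat ![1, -1, 0, 0] (-1) *
      reflMat ![1, 0, 0, 1] (-1) *
      reflMat ![1, Complex.I, 1, -Complex.I] (-1) * reflMat ![1, 1, 1, 1] (-1))
    (E : Submodule ℂ (Fin 4 → ℂ)) (hE : E = eigSpace (g ^ 2) (ζ ^ 2))
    (r₁ r₄' : Matrix (Fin 2) (Fin 2) ℂ)
    (hr₁ : r₁ = (ω / 2) • !![-1 - Complex.I, 1 - Complex.I;
      -1 - Complex.I, -1 + Complex.I])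
    (hr₄' : r₄' = (1 / 2 : ℂ) • !![1 + Complex.I, -1 + Complex.I;
      -1 + Complex.I, 1 + Complex.I])
    (G10 : Submonoid (Matrix (Fin 2) (Fin 2) ℂ))
    (hG10 : G10 = Submonoid.closure {r₁, r₄'}) :
    Module.finrank ℂ E = 2 ∧
    ∃ Φ : (Fin 2 → ℂ) →ₗ[ℂ] (Fin 4 → ℂ), Function.Injective Φ ∧
      LinearMap.range Φ = E ∧
      (G10 : Set (Matrix (Fin 2) (Fin 2) ℂ)) =
        {M' | ∃ M ∈ G31, (∀ v ∈ E, M.mulVec v ∈ E) ∧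
          ∀ t : Fin 2 → ℂ, M.mulVec (Φ t) = Φ (M'.mulVec t)} := by
  have hz : ζ ^ 2 = z0 := by
    rw [hζ, ← exp_pi_six, ← Complex.exp_nat_mul]
    congr 1; push_cast; ring
  have hw : ω = z0 ^ 2 - 1 := by
    rw [hω, ← z0_four, ← exp_pi_six, ← Complex.exp_nat_mul]
    congr 1; push_cast; ring
  have e1 : r₁ = gen10 false := by
    rw [hr₁, hw]
    ext i j
    fin_cases i <;> fin_cases j <;> simp [gen10, ev] <;> rw [← z0_cube]
    · linear_combination (-z0 / 2) * z0_four
    · linear_combination (-z0 / 2) * z0_four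
    · linear_combination (-z0 / 2) * z0_four
    · linear_combination (z0 / 2) * z0_four
  have e4 : r₄' = gen10 true := by
    rw [hr₄']
    ext i j
    fin_cases i <;> fin_cases j <;> simp [gen10, ev, z0_cube]
  have hE' : LinearMap.range matF.mulVecLin = E := by
    rw [hE, hz, hg, g_eq, gSq_eq, range_matF]
  have h31 : G31 = grp31 := hG31
  have h10 : G10 = grp10 := by rw [hG10, e1, e4, grp10]
  refine ⟨?_, matF.mulVecLin, matF_injective, hE', ?_⟩
  · rw [← hE', LinearMap.finrank_range_of_inj matF_injective]
    simp
  · ext M'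
    rw [h10, h31]
    constructor
    · intro h
      obtain ⟨M, hM, e⟩ := grp10_lift h
      have key : ∀ t : Fin 2 → ℂ, M *ᵥ (matF.mulVecLin t) = matF.mulVecLin (M' *ᵥ t) := by
        intro t
        simp only [Matrix.mulVecLin_apply, Matrix.mulVec_mulVec, e]
      refine ⟨M, hM, ?_, key⟩
      rw [← hE']
      rintro v ⟨t, rfl⟩
      exact ⟨_, (key t).symm⟩
    · rintro ⟨M, hM, -, key⟩
      refine lift_mem_grp10 hM ?_
      apply Matrix.ext_of_mulVec_single
      intro i
      have := key (Pi.single i 1)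
      simpa only [Matrix.mulVecLin_apply, Matrix.mulVec_mulVec] using this

end
end Paper
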